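/- Let n ≥ 4, let 2 ≤ r ≤ n/2, let 0 ≤ c ≤ 1/5, and let α, α₀, α₁ ∈ [0,1] satisfy α = (1 - r/n)·α₀ + (r/n)·α₁. Then the maximum of the three quantities (i) c·√((n-1)/(r(n-1-r)))·(1 - r/n)·α₀(1-α₀) + (r/n)(α₀ - α₁), (ii) c·√((n-1)/((r-1)(n-r)))·(r/n)·α₁(1-α₁) + ((n-r)/n)(α₁ - α₀), (iii) c·√((n-1)/(r(n-1-r)))·(1 - r/n)·α₀(1-α₀) + c·√((n-1)/((r-1)(n-r)))·(r/n)·α₁(1-α₁), is at least c·√(n/(r(n-r)))·α(1-α). -/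

import Mathlib

/-!
The function `x ↦ x (1 - x)` is a Bernoulli variance: it is `1`-Lipschitz on `[0, 1]`, and the law
of total variance expresses its value at `q x + p y` as the mean of its values at `x` and `y` plus
`p q (x - y)²`. Let `D`, `A`, `B` be the coefficients at `(n, r)`, `(n - 1, r)`, `(n - 1, r - 1)`,
with `p = r / n` and `q = 1 - p`. If `x - y` is at least `t D x (1 - x)`, the Lipschitz bound lets
the linear term `p (x - y)` pay for replacing `q x + p y` by `x`; symmetrically with `x` and `y`
exchanged. Otherwise `(x - y)²` is so small that `D p q (x - y)²` is covered by the mean increase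
`q (A - D) + p (B - D)` of the coefficients, which is at least `D / (3 n) = D³ p q / 3`. The second
case works for `3 t² + 4 t ≤ 4`, that is up to `t = 2 / 3`, and the first one then works for
`c ≤ t / (1 + t) = 2 / 5`.
-/

open Set

section Mixing

variable {p q c D A B x y : ℝ}

lemma mul_one_sub_nonneg_of_mem_Icc (hx : x ∈ Icc (0 : ℝ) 1) : 0 ≤ x * (1 - x) :=
  mul_nonneg hx.1 (sub_nonneg.2 hx.2)

lemma mul_one_sub_le_add_abs_sub (hx : x ∈ Icc (0 : ℝ) 1) (hy : y ∈ Icc (0 : ℝ) 1) :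
    x * (1 - x) ≤ y * (1 - y) + |x - y| := by
  have hslope : |1 - x - y| ≤ 1 := abs_le.2 ⟨by linarith [hx.2, hy.2], by linarith [hx.1, hy.1]⟩
  have hdiff : x * (1 - x) - y * (1 - y) ≤ |x - y| :=
    calc x * (1 - x) - y * (1 - y) = (x - y) * (1 - x - y) := by ring
      _ ≤ |x - y| * |1 - x - y| := (le_abs_self _).trans (abs_mul _ _).le
      _ ≤ |x - y| := mul_le_of_le_one_right (abs_nonneg _) hslope
  linarith

lemma mix_mul_one_sub_mix (hpq : p + q = 1) :
    (q * x + p * y) * (1 - (q * x + p * y)) =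
      q * (x * (1 - x)) + p * (y * (1 - y)) + p * q * (x - y) ^ 2 := by
  obtain rfl : q = 1 - p := by linarith
  ring

lemma mix_le_of_large_gap (hp : 0 ≤ p) (hq : 0 ≤ q) (hpq : p + q = 1)
    (hc0 : 0 ≤ c) (hc : c ≤ 2 / 5) (hD0 : 0 ≤ D) (hD1 : D ≤ 1) (hDA : D ≤ A)
    (hx : x ∈ Icc (0 : ℝ) 1) (hy : y ∈ Icc (0 : ℝ) 1)
    (hgap : 2 / 3 * D * (x * (1 - x)) ≤ x - y) :
    c * D * ((q * x + p * y) * (1 - (q * x + p * y))) ≤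
      c * A * q * (x * (1 - x)) + p * (x - y) := by
  have hfx := mul_one_sub_nonneg_of_mem_Icc hx
  have hxy : 0 ≤ x - y := le_trans (by positivity) hgap
  have hmix : q * x + p * y ∈ Icc (0 : ℝ) 1 :=
    convex_Icc (0 : ℝ) 1 hx hy hq hp (by linarith)
  have hdist : |q * x + p * y - x| = p * (x - y) := by
    obtain rfl : q = 1 - p := by linarith
    rw [show (1 - p) * x + p * y - x = -(p * (x - y)) by ring, abs_neg,
      abs_of_nonneg (mul_nonneg hp hxy)]
  have hlip : (q * x + p * y) * (1 - (q * x + p * y)) ≤ x * (1 - x) + p * (x - y) :=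
    hdist ▸ mul_one_sub_le_add_abs_sub hmix hx
  have hvar : c * (D * (x * (1 - x))) ≤ 3 / 5 * (x - y) :=
    calc c * (D * (x * (1 - x))) ≤ 2 / 5 * (D * (x * (1 - x))) := by gcongr
      _ ≤ 3 / 5 * (x - y) := by linarith
  have hlin : c * D * (x - y) ≤ 2 / 5 * (x - y) := by
    gcongr
    exact (mul_le_of_le_one_right hc0 hD1).trans hc
  calc c * D * ((q * x + p * y) * (1 - (q * x + p * y)))
      ≤ c * D * (x * (1 - x) + p * (x - y)) := by gcongr
    _ = c * D * q * (x * (1 - x)) + p * (c * (D * (x * (1 - x))) + c * D * (x - y)) := by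
        obtain rfl : q = 1 - p := by linarith
        ring
    _ ≤ c * A * q * (x * (1 - x)) + p * (x - y) := by
        gcongr
        linarith

lemma mix_le_of_small_gap (hp : 0 ≤ p) (hq : 0 ≤ q) (hpq : p + q = 1)
    (hc0 : 0 ≤ c) (hD0 : 0 ≤ D) (hD1 : D ≤ 1) (hDA : D ≤ A) (hDB : D ≤ B)
    (hincr : D ^ 3 * (p * q) / 3 ≤ q * (A - D) + p * (B - D))
    (hx : x ∈ Icc (0 : ℝ) 1) (hy : y ∈ Icc (0 : ℝ) 1)
    (hgap : |x - y| ≤ 2 / 3 * D * (x * (1 - x))) :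
    c * D * ((q * x + p * y) * (1 - (q * x + p * y))) ≤
      c * A * q * (x * (1 - x)) + c * B * p * (y * (1 - y)) := by
  have hlip := mul_one_sub_le_add_abs_sub hx hy
  have hquarter : x * (1 - x) ≤ 1 / 4 := by linarith [sq_nonneg (x - 1 / 2)]
  have hfx := mul_one_sub_nonneg_of_mem_Icc hx
  set M := x * (1 - x)
  have hfy : M / 3 ≤ y * (1 - y) := by
    have hDM : D * M ≤ M := mul_le_of_le_one_left hfx hD1
    linarith
  have hsq : (x - y) ^ 2 ≤ D ^ 2 * M / 9 :=
    calc (x - y) ^ 2 = |x - y| ^ 2 := (sq_abs _).symm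
      _ ≤ (2 / 3 * D * M) ^ 2 := by gcongr
      _ = 4 / 9 * D ^ 2 * M * M := by ring
      _ ≤ 4 / 9 * D ^ 2 * M * (1 / 4) := by gcongr
      _ = D ^ 2 * M / 9 := by ring
  have hcover : D * (p * q * (x - y) ^ 2) ≤ q * (A - D) * M + p * (B - D) * (y * (1 - y)) :=
    calc D * (p * q * (x - y) ^ 2) ≤ D * (p * q * (D ^ 2 * M / 9)) := by gcongr
      _ = D ^ 3 * (p * q) / 3 * (M / 3) := by ring
      _ ≤ (q * (A - D) + p * (B - D)) * (M / 3) := by gcongr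
      _ = q * (A - D) * (M / 3) + p * (B - D) * (M / 3) := by ring
      _ ≤ q * (A - D) * M + p * (B - D) * (y * (1 - y)) := by
          have := sub_nonneg.2 hDA
          have := sub_nonneg.2 hDB
          gcongr
          linarith
  calc c * D * ((q * x + p * y) * (1 - (q * x + p * y)))
      = c * (D * (q * M) + D * (p * (y * (1 - y))) + D * (p * q * (x - y) ^ 2)) := by
        rw [mix_mul_one_sub_mix hpq]
        ring
    _ ≤ c * (A * (q * M) + B * (p * (y * (1 - y)))) :=
        mul_le_mul_of_nonneg_left (by linarith) hc0
    _ = c * A * q * M + c * B * p * (y * (1 - y)) := by ring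

theorem mix_le_max (hp : 0 ≤ p) (hq : 0 ≤ q) (hpq : p + q = 1)
    (hc0 : 0 ≤ c) (hc : c ≤ 2 / 5) (hD0 : 0 ≤ D) (hD1 : D ≤ 1) (hDA : D ≤ A) (hDB : D ≤ B)
    (hincr : D ^ 3 * (p * q) / 3 ≤ q * (A - D) + p * (B - D))
    (hx : x ∈ Icc (0 : ℝ) 1) (hy : y ∈ Icc (0 : ℝ) 1) :
    c * D * ((q * x + p * y) * (1 - (q * x + p * y))) ≤
      max (max (c * A * q * (x * (1 - x)) + p * (x - y)) (c * B * p * (y * (1 - y)) + q * (y - x)))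
        (c * A * q * (x * (1 - x)) + c * B * p * (y * (1 - y))) := by
  have hqp : q + p = 1 := by linarith
  rw [le_max_iff, le_max_iff]
  rcases le_or_gt (2 / 3 * D * (x * (1 - x))) (x - y) with hxy | hxy
  · exact .inl (.inl (mix_le_of_large_gap hp hq hpq hc0 hc hD0 hD1 hDA hx hy hxy))
  rcases le_or_gt (2 / 3 * D * (y * (1 - y))) (y - x) with hyx | hyx
  · rw [add_comm (q * x)]
    exact .inl (.inr (mix_le_of_large_gap hq hp hqp hc0 hc hD0 hD1 hDB hy hx hyx))
  right
  rcases le_total y x with h | h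
  · rw [← abs_of_nonneg (sub_nonneg.2 h)] at hxy
    exact mix_le_of_small_gap hp hq hpq hc0 hD0 hD1 hDA hDB hincr hx hy hxy.le
  · rw [← abs_of_nonneg (sub_nonneg.2 h)] at hyx
    rw [add_comm (q * x), add_comm (c * A * q * _)]
    exact mix_le_of_small_gap hq hp hqp hc0 hD0 hD1 hDB hDA (by linarith) hy hx hyx.le

end Mixing

lemma add_div_le_of_sq_add_le_sq {a b e : ℝ} (ha : 0 < a) (hb : 0 ≤ b) (he0 : 0 ≤ e)
    (he : e ≤ 3 * a ^ 2) (h : a ^ 2 + e ≤ b ^ 2) : a + e / (3 * a) ≤ b := by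
  refine le_of_sq_le_sq ?_ hb
  have hquad : e * (e / (9 * a ^ 2)) ≤ e * (1 / 3) := by
    refine mul_le_mul_of_nonneg_left ?_ he0
    rw [div_le_iff₀ (by positivity)]
    linarith
  calc (a + e / (3 * a)) ^ 2 = a ^ 2 + 2 / 3 * e + e * (e / (9 * a ^ 2)) := by
        field_simp
        ring
    _ ≤ b ^ 2 := by linarith

/-- The coefficient `√(n / (r (n - r)))` of the variance term at level `(n, r)`; the inequality
compares its value at `(n, r)` with those at `(n - 1, r)` and `(n - 1, r - 1)`. The arguments are
real so that subtraction does not truncate. -/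
noncomputable def varianceCoeff (n r : ℝ) : ℝ :=
  Real.sqrt (n / (r * (n - r)))

namespace varianceCoeff

variable {n r : ℝ}

lemma symm (n r : ℝ) : varianceCoeff n (n - r) = varianceCoeff n r := by
  rw [varianceCoeff, varianceCoeff, sub_sub_cancel, mul_comm]

lemma nonneg (n r : ℝ) : 0 ≤ varianceCoeff n r :=
  Real.sqrt_nonneg _

lemma pos (hr : 0 < r) (hrn : r < n) : 0 < varianceCoeff n r :=
  Real.sqrt_pos.2 (div_pos (hr.trans hrn) (mul_pos hr (sub_pos.2 hrn)))

lemma sq_eq (hr : 0 < r) (hrn : r < n) : varianceCoeff n r ^ 2 = 1 / r + 1 / (n - r) := by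
  have hs : 0 < n - r := sub_pos.2 hrn
  have hn : 0 < n := hr.trans hrn
  rw [varianceCoeff, Real.sq_sqrt (by positivity)]
  field_simp
  ring

lemma le_one (hr : 0 < r) (hrn : r < n) (hn : n ≤ r * (n - r)) : varianceCoeff n r ≤ 1 :=
  Real.sqrt_le_one.2 (div_le_one_of_le₀ hn (mul_pos hr (sub_pos.2 hrn)).le)

lemma add_le_pred_left (hr : 0 < r) (hrn : r < n - 1) :
    varianceCoeff n r + 1 / (n - r) ^ 2 / (3 * varianceCoeff n r) ≤ varianceCoeff (n - 1) r := by
  have hs : 1 < n - r := by linarith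
  have hs' : 0 < n - 1 - r := by linarith
  have : 0 < n - r := by linarith
  have hsq := sq_eq hr (show r < n by linarith)
  have hinv : 1 / (n - r) ^ 2 ≤ 1 / (n - r) := by
    gcongr
    exact le_self_pow₀ hs.le two_ne_zero
  have hr' : 0 < 1 / r := by positivity
  have hs_inv : 0 < 1 / (n - r) := by positivity
  refine add_div_le_of_sq_add_le_sq (pos hr (by linarith)) (nonneg _ _) (by positivity)
    (by linarith) ?_
  rw [hsq, sq_eq hr hrn, add_assoc]
  gcongr
  calc 1 / (n - r) + 1 / (n - r) ^ 2 ≤ 1 / (n - r) + 1 / ((n - r) * (n - 1 - r)) := by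
        rw [pow_two]
        gcongr
        linarith
    _ = 1 / (n - 1 - r) := by
        field_simp
        ring

lemma add_le_pred_pred (hr : 1 < r) (hrn : r < n) :
    varianceCoeff n r + 1 / r ^ 2 / (3 * varianceCoeff n r) ≤ varianceCoeff (n - 1) (r - 1) := by
  have h := add_le_pred_left (n := n) (r := n - r) (by linarith) (by linarith)
  rwa [symm, sub_sub_cancel, ← symm (n - 1), sub_sub_sub_cancel_left] at h

lemma le_pred_left (hr : 0 < r) (hrn : r < n - 1) :
    varianceCoeff n r ≤ varianceCoeff (n - 1) r :=
  have := nonneg n r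
  (le_add_of_nonneg_right (by positivity)).trans (add_le_pred_left hr hrn)

lemma le_pred_pred (hr : 1 < r) (hrn : r < n) :
    varianceCoeff n r ≤ varianceCoeff (n - 1) (r - 1) :=
  have := nonneg n r
  (le_add_of_nonneg_right (by positivity)).trans (add_le_pred_pred hr hrn)

lemma cube_mul_le_mean_increase (hr : 1 < r) (hrn : r < n - 1) :
    varianceCoeff n r ^ 3 * (r / n * (1 - r / n)) / 3 ≤
      (1 - r / n) * (varianceCoeff (n - 1) r - varianceCoeff n r) +
        r / n * (varianceCoeff (n - 1) (r - 1) - varianceCoeff n r) := by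
  have hr0 : 0 < r := by linarith
  have hs : 0 < n - r := by linarith
  have hn : 0 < n := by linarith
  have hD := pos hr0 (show r < n by linarith)
  have hsq := sq_eq hr0 (show r < n by linarith)
  have hA := le_sub_iff_add_le'.2 (add_le_pred_left hr0 hrn)
  have hB := le_sub_iff_add_le'.2 (add_le_pred_pred hr (show r < n by linarith))
  set D := varianceCoeff n r
  have hq : 1 - r / n = (n - r) / n := by field_simp
  have hmean : (n - r) / n * (1 / (n - r) ^ 2) + r / n * (1 / r ^ 2) = D ^ 2 / n := by
    rw [hsq]
    field_simp
    ring
  have hprod : D ^ 2 * (r / n * ((n - r) / n)) = 1 / n := by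
    rw [hsq]
    field_simp
    ring
  rw [hq]
  calc D ^ 3 * (r / n * ((n - r) / n)) / 3
      = D ^ 2 * (r / n * ((n - r) / n)) * D / 3 := by ring
    _ = D ^ 2 / n / (3 * D) := by
        rw [hprod]
        field_simp
    _ = (n - r) / n * (1 / (n - r) ^ 2 / (3 * D)) + r / n * (1 / r ^ 2 / (3 * D)) := by
        rw [← hmean]
        ring
    _ ≤ _ := by gcongr

end varianceCoeff

theorem stmt_3_general (n r : ℝ) (hr : 1 < r) (hn : n ≤ r * (n - r))
    (c α α₀ α₁ : ℝ) (hc0 : 0 ≤ c) (hc : c ≤ 2 / 5)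
    (hα0 : α₀ ∈ Icc (0 : ℝ) 1) (hα1 : α₁ ∈ Icc (0 : ℝ) 1)
    (heq : α = (1 - r / n) * α₀ + r / n * α₁) :
    max (max
      (c * Real.sqrt ((n - 1) / (r * (n - 1 - r))) * (1 - r / n)
          * (α₀ * (1 - α₀)) + (r / n) * (α₀ - α₁))
      (c * Real.sqrt ((n - 1) / ((r - 1) * (n - r))) * (r / n)
          * (α₁ * (1 - α₁)) + ((n - r) / n) * (α₁ - α₀)))
      (c * Real.sqrt ((n - 1) / (r * (n - 1 - r))) * (1 - r / n)
          * (α₀ * (1 - α₀))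
        + c * Real.sqrt ((n - 1) / ((r - 1) * (n - r))) * (r / n)
          * (α₁ * (1 - α₁)))
      ≥ c * Real.sqrt (n / (r * (n - r))) * (α * (1 - α)) := by
  have hprod : 0 < (r - 1) * (n - 1 - r) := by linarith
  have hrn : r < n - 1 := sub_pos.1 ((pos_iff_pos_of_mul_pos hprod).1 (sub_pos.2 hr))
  have hn0 : 0 < n := by linarith
  have hr0 : 0 < r := by linarith
  have hrn' : r < n := by linarith
  have hp : 0 ≤ r / n := by positivity
  have hq : (n - r) / n = 1 - r / n := by field_simp
  have hq0 : 0 ≤ 1 - r / n := sub_nonneg.2 (div_le_one_of_le₀ hrn'.le hn0.le)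
  have key := mix_le_max hp hq0 (add_sub_cancel (r / n) 1) hc0 hc
    (varianceCoeff.nonneg n r) (varianceCoeff.le_one hr0 hrn' hn)
    (varianceCoeff.le_pred_left hr0 hrn) (varianceCoeff.le_pred_pred hr hrn')
    (varianceCoeff.cube_mul_le_mean_increase hr hrn) hα0 hα1
  rw [heq, hq]
  simpa only [varianceCoeff, sub_sub_sub_cancel_right] using key

/-- Proposition 3.1 of the paper (the technical inequality behind the induction).
With `α = (1 - r/n)·α₀ + (r/n)·α₁`, the maximum of the three displayed quantities is at
least `c·√(n/(r(n-r)))·α(1-α)`. -/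
theorem stmt_3 (n r : ℕ) (hn : 4 ≤ n) (hr2 : 2 ≤ r) (hrn : 2 * r ≤ n)
    (c α α₀ α₁ : ℝ) (hc0 : 0 ≤ c) (hc : c ≤ 1 / 5)
    (hα : α ∈ Set.Icc (0 : ℝ) 1) (hα0 : α₀ ∈ Set.Icc (0 : ℝ) 1)
    (hα1 : α₁ ∈ Set.Icc (0 : ℝ) 1)
    (heq : α = (1 - (r : ℝ) / n) * α₀ + ((r : ℝ) / n) * α₁) :
    max (max
      (c * Real.sqrt (((n : ℝ) - 1) / ((r : ℝ) * ((n : ℝ) - 1 - r))) * (1 - (r : ℝ) / n)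
          * (α₀ * (1 - α₀)) + ((r : ℝ) / n) * (α₀ - α₁))
      (c * Real.sqrt (((n : ℝ) - 1) / (((r : ℝ) - 1) * ((n : ℝ) - r))) * ((r : ℝ) / n)
          * (α₁ * (1 - α₁)) + (((n : ℝ) - r) / n) * (α₁ - α₀)))
      (c * Real.sqrt (((n : ℝ) - 1) / ((r : ℝ) * ((n : ℝ) - 1 - r))) * (1 - (r : ℝ) / n)
          * (α₀ * (1 - α₀))
        + c * Real.sqrt (((n : ℝ) - 1) / (((r : ℝ) - 1) * ((n : ℝ) - r))) * ((r : ℝ) / n)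
          * (α₁ * (1 - α₁)))
      ≥ c * Real.sqrt ((n : ℝ) / ((r : ℝ) * ((n : ℝ) - r))) * (α * (1 - α)) := by
  have hr : (2 : ℝ) ≤ r := by exact_mod_cast hr2
  have hrn' : 2 * (r : ℝ) ≤ n := by exact_mod_cast hrn
  exact stmt_3_general n r (by linarith) (by nlinarith) c α α₀ α₁ hc0 (by linarith) hα0 hα1 heq
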